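/- arXiv:2205.07137 — 2 statements merged into one kernel-verified Lean document; each statement's English description precedes it below -/
import Mathlib

section
/- Let 0 → M → N → L → 0 be a short exact sequence of R-modules with N u-S-finitely presented. Then L is u-S-finitely presented if and only if M is S-finite. -/
/-!
Both directions choose generators and lift maps out of finite free modules, keeping track of the
powers of the elements of `S` that are lost on the way.

If `t • M ⊆ M₀` with `M₀` finitely generated, and `φ : F → N` is a finite presentation of `N` up
to `s`-torsion, then `s • f(M₀)` lifts along `φ` to a finitely generated submodule `K ⊆ F`, and
`F ⧸ K → L` is a finite presentation of `L` up to `s² t`-torsion.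

Conversely, let `ψ : P → L` be a finite presentation of `L` up to `t`-torsion and
`π : Rⁿ → P` a surjection with finitely generated kernel. Lift `ψ ∘ π` along `g` to `h : Rⁿ → N`,
and choose `ν : Rᵏ → N` with `s • N ⊆ range ν`. Since `t • L ⊆ range ψ`, there is `y : Rᵏ → Rⁿ`
with `g ∘ h ∘ y = t • g ∘ ν`. The submodules `h (ker π)` and `range (t • ν - h ∘ y)` of `N` are
finitely generated and lie in `f(M)`, and their sum contains `t² s • f(M)`.
-/

universe u

variable {R : Type u} [CommRing R]

/-- `M` is `S`-finite with respect to `s`: there is a finitely generated submodule `F` of `M`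
with `s • M ⊆ F`. -/
def SFiniteWrt (s : R) (M : Type u) [AddCommGroup M] [Module R M] : Prop :=
  ∃ F : Submodule R M, F.FG ∧ ∀ m : M, s • m ∈ F

/-- `M` is uniformly `S`-finitely presented with respect to `s`: there is an exact sequence
`0 → T₁ → F → M → T₂ → 0` with `F` finitely presented and `s • T₁ = 0 = s • T₂`. -/
def UsFPWrt (s : R) (M : Type u) [AddCommGroup M] [Module R M] : Prop :=
  ∃ (F : Type u) (_ : AddCommGroup F) (_ : Module R F) (f : F →ₗ[R] M),
    Module.FinitePresentation R F ∧ (∀ x ∈ LinearMap.ker f, s • x = 0) ∧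
      (∀ m : M, s • m ∈ LinearMap.range f)

/-- A map from a projective module lifts along `b` as soon as its image lies in the range of `b`. -/
lemma exists_comp_eq_of_range_le {P A B : Type*} [AddCommGroup P] [Module R P]
    [Module.Projective R P] [AddCommGroup A] [Module R A] [AddCommGroup B] [Module R B]
    (a : P →ₗ[R] B) (b : A →ₗ[R] B) (hab : ∀ x, a x ∈ LinearMap.range b) :
    ∃ y : P →ₗ[R] A, ∀ x, b (y x) = a x := by
  obtain ⟨y, hy⟩ := Module.projective_lifting_property b.rangeRestrict
    (a.codRestrict (LinearMap.range b) hab) b.surjective_rangeRestrict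
  exact ⟨y, fun x => congrArg Subtype.val (LinearMap.congr_fun hy x)⟩

lemma exists_range_eq_of_fg {M : Type*} [AddCommGroup M] [Module R M] (F : Submodule R M)
    (hF : F.FG) : ∃ (n : ℕ) (ν : (Fin n → R) →ₗ[R] M), LinearMap.range ν = F := by
  have : Module.Finite R F := Module.Finite.iff_fg.mpr hF
  obtain ⟨n, p, hp⟩ := Module.Finite.exists_fin' R F
  exact ⟨n, F.subtype ∘ₗ p, by
    rw [LinearMap.range_comp, LinearMap.range_eq_top.mpr hp, Submodule.map_top,
      Submodule.range_subtype]⟩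

lemma UsFPWrt.sFiniteWrt {s : R} {N : Type u} [AddCommGroup N] [Module R N] (h : UsFPWrt s N) :
    SFiniteWrt s N := by
  obtain ⟨F, _, _, φ, hF, -, hφ⟩ := h
  refine ⟨LinearMap.range φ, ?_, hφ⟩
  rw [LinearMap.range_eq_map]
  exact Module.Finite.fg_top.map φ

lemma UsFPWrt.of_shortExact {s t : R}
    {M N L : Type u} [AddCommGroup M] [Module R M] [AddCommGroup N] [Module R N]
    [AddCommGroup L] [Module R L] (f : M →ₗ[R] N) (g : N →ₗ[R] L)
    (hg : Function.Surjective g) (hfg : LinearMap.ker g = LinearMap.range f)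
    (hN : UsFPWrt s N) (hM : SFiniteWrt t M) : UsFPWrt (s * s * t) L := by
  obtain ⟨F, _, _, φ, hF, hker, hran⟩ := hN
  obtain ⟨M₀, hM₀, htM⟩ := hM
  obtain ⟨k, ν, rfl⟩ := exists_range_eq_of_fg M₀ hM₀
  have hgf : ∀ m, g (f m) = 0 := fun m => by
    rw [← LinearMap.mem_ker, hfg]; exact ⟨m, rfl⟩
  obtain ⟨y, hy⟩ := exists_comp_eq_of_range_le (s • (f ∘ₗ ν)) φ (fun x => hran _)
  have hK : LinearMap.range y ≤ LinearMap.ker (g ∘ₗ φ) := by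
    rintro _ ⟨x, rfl⟩
    simp [hy, hgf]
  refine ⟨F ⧸ LinearMap.range y, inferInstance, inferInstance,
    (LinearMap.range y).liftQ (g ∘ₗ φ) hK, ?_, ?_, ?_⟩
  · refine Module.finitePresentation_of_surjective (LinearMap.range y).mkQ
      (Submodule.mkQ_surjective _) ?_
    rw [Submodule.ker_mkQ, LinearMap.range_eq_map]
    exact Module.Finite.fg_top.map y
  · intro q hq
    obtain ⟨x, rfl⟩ := Submodule.mkQ_surjective _ q
    have hx : φ x ∈ LinearMap.ker g := by simpa using hq
    rw [hfg] at hx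
    obtain ⟨m, hm⟩ := hx
    obtain ⟨c, hc⟩ := htM m
    -- `φ` sends `s t x` and `y c` to the same element, so they differ by `s`-torsion.
    have h0 : (s * t) • x - y c ∈ LinearMap.ker φ := by
      simp [hy, hc, ← hm, mul_smul]
    have h1 := hker _ h0
    rw [← map_smul, Submodule.mkQ_apply, Submodule.Quotient.mk_eq_zero]
    refine ⟨s • c, ?_⟩
    rw [smul_sub, sub_eq_zero] at h1
    rw [map_smul, ← h1, smul_smul, mul_assoc]
  · intro l
    obtain ⟨n, rfl⟩ := hg l
    obtain ⟨x, hx⟩ := hran n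
    refine ⟨(LinearMap.range y).mkQ ((s * t) • x), ?_⟩
    simp only [Submodule.mkQ_apply, Submodule.liftQ_apply, LinearMap.comp_apply, map_smul, hx,
      smul_smul]
    congr 1
    ring

lemma SFiniteWrt.of_shortExact {s t : R}
    {M N L : Type u} [AddCommGroup M] [Module R M] [AddCommGroup N] [Module R N]
    [AddCommGroup L] [Module R L] (f : M →ₗ[R] N) (g : N →ₗ[R] L)
    (hf : Function.Injective f) (hg : Function.Surjective g)
    (hfg : LinearMap.ker g = LinearMap.range f)
    (hN : SFiniteWrt s N) (hL : UsFPWrt t L) : SFiniteWrt (t * t * s) M := by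
  obtain ⟨N₀, hN₀, hsN⟩ := hN
  obtain ⟨k, ν, rfl⟩ := exists_range_eq_of_fg N₀ hN₀
  obtain ⟨P, _, _, ψ, hP, hker, hran⟩ := hL
  obtain ⟨n, π, hπ⟩ := Module.Finite.exists_fin' R P
  have hK : (LinearMap.ker π).FG := Module.FinitePresentation.fg_ker π hπ
  obtain ⟨h, hh⟩ := exists_comp_eq_of_range_le (ψ ∘ₗ π) g (fun x => hg _)
  obtain ⟨y, hy⟩ := exists_comp_eq_of_range_le (t • (g ∘ₗ ν)) (ψ ∘ₗ π) (fun x => by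
    rw [LinearMap.range_comp, LinearMap.range_eq_top.mpr hπ, Submodule.map_top]
    exact hran _)
  let E : Submodule R N := (LinearMap.ker π).map h ⊔ LinearMap.range (t • ν - h ∘ₗ y)
  have hE : E ≤ LinearMap.range f := by
    rw [← hfg]
    refine sup_le ?_ ?_
    · rintro _ ⟨x, hx, rfl⟩
      have hx' : π x = 0 := hx
      simp [hh, hx']
    · rintro _ ⟨x, rfl⟩
      have := hy x
      simp only [LinearMap.comp_apply, LinearMap.smul_apply] at this
      simp [hh, this]
  have hEfg : E.FG := by
    refine (hK.map h).sup ?_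
    rw [LinearMap.range_eq_map]
    exact Module.Finite.fg_top.map _
  refine ⟨E.comap f, ?_, fun m => ?_⟩
  · refine Submodule.fg_of_fg_map_injective f hf ?_
    rwa [Submodule.map_comap_eq, inf_eq_right.mpr hE]
  · obtain ⟨c, hc⟩ := hsN (f m)
    have hgf : g (f m) = 0 := by
      rw [← LinearMap.mem_ker, hfg]; exact ⟨m, rfl⟩
    have h0 : π (y c) ∈ LinearMap.ker ψ := by
      have := hy c
      simp only [LinearMap.comp_apply, LinearMap.smul_apply, hc, map_smul, hgf, smul_zero] at this
      exact this
    have h1 : t • y c ∈ LinearMap.ker π := by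
      rw [LinearMap.mem_ker, map_smul]; exact hker _ h0
    have h2 : f ((t * t * s) • m) = h (t • y c) + (t • ν - h ∘ₗ y) (t • c) := by
      simp only [map_smul, LinearMap.sub_apply, LinearMap.smul_apply, LinearMap.comp_apply, hc,
        smul_sub, smul_smul]
      rw [add_sub_cancel, mul_assoc]
    rw [Submodule.mem_comap, h2]
    exact Submodule.add_mem_sup ⟨_, h1, rfl⟩ ⟨_, rfl⟩


/-- Let `0 → M → N → L → 0` be a short exact sequence of `R`-modules with `N`
`u`-`S`-finitely presented.  Then `L` is `u`-`S`-finitely presented if and only if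
`M` is `S`-finite. -/
theorem usFP_iff_sFinite_of_shortExact (S : Submonoid R)
    {M N L : Type u} [AddCommGroup M] [Module R M] [AddCommGroup N] [Module R N]
    [AddCommGroup L] [Module R L]
    (f : M →ₗ[R] N) (g : N →ₗ[R] L)
    (hf : Function.Injective f) (hg : Function.Surjective g)
    (hfg : LinearMap.ker g = LinearMap.range f)
    (hN : ∃ s ∈ S, UsFPWrt s N) :
    (∃ s ∈ S, UsFPWrt s L) ↔ (∃ s ∈ S, SFiniteWrt s M) := by
  obtain ⟨s, hs, hN⟩ := hN
  constructor
  · rintro ⟨t, ht, hL⟩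
    exact ⟨t * t * s, S.mul_mem (S.mul_mem ht ht) hs,
      SFiniteWrt.of_shortExact f g hf hg hfg hN.sFiniteWrt hL⟩
  · rintro ⟨t, ht, hM⟩
    exact ⟨s * s * t, S.mul_mem (S.mul_mem hs hs) ht, UsFPWrt.of_shortExact f g hg hfg hN hM⟩
end

section
/- An R-module M is a coherent module (i.e., M is finitely generated and every finitely generated submodule of M is finitely presented) if and only if for every maximal ideal m of R, M is u-(R∖m)-coherent. -/
/-!
The forward direction holds with `s = 1`. For the converse, the `s` for which a fixed module is
`S`-finite form an ideal (`sFiniteIdeal`), so a module that is `S`-finite with respect to some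
`s ∉ m` for every maximal `m` is finitely generated. This gives finiteness of `M`.
For a finitely generated submodule `N` with a surjection `π : Rⁿ → N`, a Schanuel-type argument
(`sFiniteWrt_ker_of_usFPWrt`) shows that `N` being `u`-`S`-finitely presented with respect to `s`
makes `ker π` `S`-finite with respect to `s * s`. Since `m` is prime, `s * s ∉ m`, so the same
local-to-global principle shows that `ker π` is finitely generated.
-/

universe u

variable {R : Type u} [CommRing R]

/-- `M` is uniformly `S`-coherent with respect to `s`: `M` is `S`-finite with respect to `s`
and every finitely generated submodule of `M` is `u`-`S`-finitely presented with respect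
to `s`. -/
def UsCoherentWrt (s : R) (M : Type u) [AddCommGroup M] [Module R M] : Prop :=
  SFiniteWrt s M ∧ ∀ N : Submodule R M, N.FG → UsFPWrt s ↥N

/-- The ideal of all `s` such that `M` is `S`-finite with respect to `s`. -/
def sFiniteIdeal (M : Type u) [AddCommGroup M] [Module R M] : Ideal R where
  carrier := {s | SFiniteWrt s M}
  zero_mem' := ⟨⊥, Submodule.fg_bot, fun m => by simp⟩
  add_mem' := by
    rintro a b ⟨F, hF, hFm⟩ ⟨G, hG, hGm⟩
    exact ⟨F ⊔ G, hF.sup hG, fun m => by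
      rw [add_smul]
      exact Submodule.add_mem_sup (hFm m) (hGm m)⟩
  smul_mem' := by
    rintro c a ⟨F, hF, hFm⟩
    exact ⟨F, hF, fun m => by
      rw [smul_assoc]
      exact F.smul_mem c (hFm m)⟩

theorem finite_of_sFiniteWrt_of_maximal (M : Type u) [AddCommGroup M] [Module R M]
    (h : ∀ m : Ideal R, m.IsMaximal → ∃ s ∉ m, SFiniteWrt s M) : Module.Finite R M := by
  have htop : sFiniteIdeal (R := R) M = ⊤ := by
    by_contra hne
    obtain ⟨m, hm, hle⟩ := Ideal.exists_le_maximal _ hne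
    obtain ⟨s, hs, hsM⟩ := h m hm
    exact hs (hle hsM)
  obtain ⟨F, hF, hFm⟩ : SFiniteWrt (1 : R) M := (Ideal.eq_top_iff_one _).1 htop
  have hFtop : F = ⊤ := eq_top_iff.2 fun x _ => by simpa using hFm x
  exact ⟨hFtop ▸ hF⟩

/-- Given `f : F → N` with `F` finitely presented and kernel and cokernel killed by `s`, cover `F`
by `p : Rᵏ → F` and compare `p` with `π` through maps `h : Rᵏ → Rⁿ` over `f` and
`g : Rⁿ → Rᵏ` over `s`. For `x ∈ ker π`,
`s² x = h (s g x) - s (h g - s) x` lies in the finitely generated submodule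
`h (ker p) + range (h g - s)` of `ker π`. -/
theorem sFiniteWrt_ker_of_usFPWrt {N : Type u} [AddCommGroup N] [Module R N] {s : R}
    (hN : UsFPWrt s N) {n : ℕ} (π : (Fin n → R) →ₗ[R] N) (hπ : Function.Surjective π) :
    SFiniteWrt (s * s) (LinearMap.ker π) := by
  obtain ⟨F, _, _, f, hF, hker, hrange⟩ := hN
  obtain ⟨k, p, hp⟩ := Module.Finite.exists_fin' R F
  have hL : (LinearMap.ker p).FG := Module.FinitePresentation.fg_ker p hp
  obtain ⟨h, hh⟩ := Module.projective_lifting_property π (f ∘ₗ p) hπ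
  -- `s • π` factors through the range of `f`, hence lifts along `Rᵏ → F → range f`.
  obtain ⟨g, hg⟩ := Module.projective_lifting_property
    (f.rangeRestrict ∘ₗ p) ((s • π).codRestrict (LinearMap.range f) fun x => hrange (π x))
    (f.surjective_rangeRestrict.comp hp)
  have hh' : ∀ y, π (h y) = f (p y) := fun y => LinearMap.congr_fun hh y
  have hg' : ∀ x, f (p (g x)) = s • π x := fun x =>
    congrArg Subtype.val (LinearMap.congr_fun hg x)
  let d : (Fin n → R) →ₗ[R] (Fin n → R) := h ∘ₗ g - s • LinearMap.id
  have hd : ∀ x, d x = h (g x) - s • x := fun x => rfl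
  let G : Submodule R (Fin n → R) := (LinearMap.ker p).map h ⊔ LinearMap.range d
  have hGfg : G.FG := (hL.map h).sup (LinearMap.range_eq_map d ▸ Module.Finite.fg_top.map d)
  have hGle : G ≤ LinearMap.ker π := by
    refine sup_le ?_ ?_
    · rintro _ ⟨y, hy, rfl⟩
      have hy' : p y = 0 := hy
      simp [hh', hy']
    · rintro _ ⟨x, rfl⟩
      simp [hd, hh', hg']
  refine ⟨G.comap (LinearMap.ker π).subtype, ?_, ?_⟩
  · refine Submodule.fg_of_fg_map_injective _ (LinearMap.ker π).injective_subtype ?_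
    rwa [Submodule.map_comap_subtype, inf_eq_right.2 hGle]
  · rintro ⟨x, hx⟩
    have hx' : π x = 0 := hx
    change (s * s) • x ∈ G
    have hgx : s • g x ∈ LinearMap.ker p := by
      rw [LinearMap.mem_ker, map_smul]
      exact hker _ (by simp [hg', hx'])
    have heq : (s * s) • x = h (s • g x) - s • d x := by
      rw [hd, map_smul, smul_sub, mul_smul]
      abel
    rw [heq]
    exact G.sub_mem (Submodule.mem_sup_left ⟨_, hgx, rfl⟩)
      (G.smul_mem s (Submodule.mem_sup_right ⟨x, rfl⟩))

/-- An `R`-module `M` is a coherent module (finitely generated, and every finitely generated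
submodule is finitely presented) if and only if for every maximal ideal `m` of `R`, `M` is
`u`-`(R ∖ m)`-coherent. -/
theorem coherent_iff_usCoherent_of_maximal (M : Type u) [AddCommGroup M] [Module R M] :
    (Module.Finite R M ∧ ∀ N : Submodule R M, N.FG → Module.FinitePresentation R ↥N) ↔
      ∀ m : Ideal R, m.IsMaximal → ∃ s ∉ m, UsCoherentWrt s M := by
  constructor
  · rintro ⟨hM, hN⟩ m hm
    refine ⟨1, fun h1 => hm.ne_top ((Ideal.eq_top_iff_one m).2 h1),
      ⟨⊤, hM.fg_top, fun _ => Submodule.mem_top⟩, fun N hNfg => ?_⟩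
    exact ⟨N, inferInstance, inferInstance, LinearMap.id, hN N hNfg,
      fun x hx => by simpa using hx, fun x => by simp⟩
  · intro H
    refine ⟨finite_of_sFiniteWrt_of_maximal M fun m hm => ?_, fun N hN => ?_⟩
    · obtain ⟨s, hs, hsM, -⟩ := H m hm
      exact ⟨s, hs, hsM⟩
    · have : Module.Finite R N := Module.Finite.iff_fg.2 hN
      obtain ⟨n, π, hπ⟩ := Module.Finite.exists_fin' R N
      refine Module.finitePresentation_of_free_of_surjective π hπ (Module.Finite.iff_fg.1 ?_)
      refine finite_of_sFiniteWrt_of_maximal _ fun m hm => ?_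
      obtain ⟨s, hs, -, hsN⟩ := H m hm
      exact ⟨s * s, fun hss => hs ((hm.isPrime.mem_or_mem hss).elim id id),
        sFiniteWrt_ker_of_usFPWrt (hsN N hN) π hπ⟩
end
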